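/- arXiv:2003.02021 — 5 statements merged into one kernel-verified Lean document; each statement's English description precedes it below -/
import Mathlib

section
/- Let f : ℕ × ℕ → ℝ be strictly positive on ℕ² ∖ {(0,0)}, satisfy f(n,0) = f(0,n) = 1 for all n ≥ 1, and satisfy f(ν₀+ν₁, ν₂)·f(ν₁, ν₀) = f(ν₁, ν₀+ν₂)·f(ν₀, ν₂) for all (ν₀,ν₁,ν₂) ∈ ℕ³ ∖ {(0,0,0)}. Then f(n,1) = f(1,n) for every n ≥ 1. -/
/-- A positive symmetric-equation solution satisfies `f(n,1) = f(1,n)` for `n ≥ 1`. -/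
theorem feith_symmetric (f : ℕ × ℕ → ℝ)
    (hpos : ∀ a b : ℕ, (a, b) ≠ (0, 0) → 0 < f (a, b))
    (hbound : ∀ n : ℕ, 1 ≤ n → f (n, 0) = 1 ∧ f (0, n) = 1)
    (heq : ∀ ν₀ ν₁ ν₂ : ℕ, (ν₀, ν₁, ν₂) ≠ (0, 0, 0) →
      f (ν₀ + ν₁, ν₂) * f (ν₁, ν₀) = f (ν₁, ν₀ + ν₂) * f (ν₀, ν₂)) :
    ∀ n : ℕ, 1 ≤ n → f (n, 1) = f (1, n) := by
  intro n hn
  induction n, hn using Nat.le_induction with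
  | base => rfl
  | succ n hn ih =>
    have h := heq n 1 1 (by simp)
    rw [ih] at h
    exact mul_right_cancel₀ (hpos 1 n (by simp)).ne' h
end

section
/- Let q > 1 be a real number and define [m]_q := (q^m − 1)/(q − 1) and [m]_q! := [m]_q·[m−1]_q⋯[1]_q with [0]_q! := 1. Let s ≥ 1, let p : Fin s → ℝ be a probability vector (pᵢ ≥ 0, Σᵢ pᵢ = 1), and let k : ℕ → (Fin s → ℕ) be a sequence with Σᵢ k(n)(i) = n for every n and k(n)(i)/n → pᵢ as n → ∞ for every i. Then (1/n²)·ln( [n]_q!/∏ᵢ [k(n)(i)]_q! ) → (ln q / 2)·(1 − Σᵢ pᵢ²) as n → ∞; i.e., the Gaussian q-multinomial coefficient equals exp(n²·(ln q/2)·S₂(p) + o(n²)). -/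
open Filter

/-- The `q`-factorial `[m]_q! = [m]_q·[m−1]_q⋯[1]_q` with `[i]_q = (q^i − 1)/(q − 1)`
and `[0]_q! = 1`. -/
noncomputable def qfact (q : ℝ) (m : ℕ) : ℝ := ∏ i ∈ Finset.Icc 1 m, (q ^ i - 1) / (q - 1)

theorem qfact_succ (q : ℝ) (m : ℕ) :
    qfact q (m + 1) = qfact q m * ((q ^ (m + 1) - 1) / (q - 1)) := by
  unfold qfact
  rw [Finset.prod_Icc_succ_top (by omega)]

theorem qfactor_pos (q : ℝ) (hq : 1 < q) (m : ℕ) : 0 < (q ^ (m + 1) - 1) / (q - 1) := by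
  have h1 : 1 < q ^ (m + 1) := one_lt_pow₀ hq (by omega)
  exact div_pos (by linarith) (by linarith)

theorem qfact_pos (q : ℝ) (hq : 1 < q) (m : ℕ) : 0 < qfact q m := by
  induction m with
  | zero => simp [qfact]
  | succ m ih => rw [qfact_succ]; exact mul_pos ih (qfactor_pos q hq m)

theorem qfact_log_bound (q : ℝ) (hq : 1 < q) (m : ℕ) :
    |Real.log (qfact q m) - Real.log q / 2 * (m : ℝ) ^ 2|
      ≤ (Real.log q + |Real.log (q - 1)|) * m := by
  induction m with
  | zero => simp [qfact]
  | succ m ih =>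
    have hf := qfactor_pos q hq m
    have hq1 : 0 < q - 1 := by linarith
    have hq0 : 0 < q := by linarith
    have hl : 0 < Real.log q := Real.log_pos hq
    rw [qfact_succ, Real.log_mul (qfact_pos q hq m).ne' hf.ne']
    have lo : (m : ℝ) * Real.log q ≤ Real.log ((q ^ (m + 1) - 1) / (q - 1)) := by
      rw [← Real.log_pow]
      apply Real.log_le_log (by positivity)
      rw [le_div_iff₀ hq1]
      have : 1 ≤ q ^ m := one_le_pow₀ hq.le
      rw [pow_succ]
      linarith
    have hi : Real.log ((q ^ (m + 1) - 1) / (q - 1))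
        ≤ ((m : ℝ) + 1) * Real.log q - Real.log (q - 1) := by
      have h2 : ((m : ℝ) + 1) * Real.log q = Real.log (q ^ (m + 1)) := by
        rw [Real.log_pow]; push_cast; ring
      rw [h2, ← Real.log_div (by positivity) hq1.ne']
      apply Real.log_le_log hf
      apply div_le_div_of_nonneg_right _ hq1.le
      linarith
    have ha := neg_abs_le (Real.log (q - 1))
    have hb := abs_nonneg (Real.log (q - 1))
    rw [abs_le] at ih ⊢
    push_cast
    constructor <;> nlinarith [ih.1, ih.2]

/-- Asymptotic relation between Gaussian `q`-multinomial coefficients and the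
quadratic Tsallis entropy `S₂(p) = 1 − Σᵢ pᵢ²`:
`(1/n²)·ln [n; k(n)]_q → (ln q/2)·S₂(p)` whenever `k(n)/n → p`. -/
theorem q_multinomial_quadratic_entropy_asymptotics
    (q : ℝ) (hq : 1 < q) (s : ℕ) (hs : 1 ≤ s)
    (p : Fin s → ℝ) (hp : ∀ i, 0 ≤ p i) (hsum : ∑ i, p i = 1)
    (k : ℕ → Fin s → ℕ) (hk : ∀ n, ∑ i, k n i = n)
    (hconv : ∀ i, Tendsto (fun n : ℕ => (k n i : ℝ) / (n : ℝ)) atTop (nhds (p i))) :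
    Tendsto
      (fun n : ℕ => (1 / (n : ℝ) ^ 2) *
        Real.log (qfact q n / ∏ i, qfact q (k n i)))
      atTop (nhds ((Real.log q / 2) * (1 - ∑ i, p i ^ 2))) := by
  set L := Real.log q with hL
  set D := L + |Real.log (q - 1)| with hD
  have hD0 : 0 ≤ D := add_nonneg (Real.log_pos hq).le (abs_nonneg _)
  have hmain : Tendsto (fun n : ℕ => (L / 2) * (1 - ∑ i, ((k n i : ℝ) / (n : ℝ)) ^ 2))
      atTop (nhds ((L / 2) * (1 - ∑ i, p i ^ 2))) := by
    apply Tendsto.const_mul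
    apply Tendsto.const_sub
    exact tendsto_finsetSum _ fun i _ => (hconv i).pow 2
  have herr : Tendsto (fun n : ℕ => (1 / (n : ℝ) ^ 2) *
        Real.log (qfact q n / ∏ i, qfact q (k n i))
        - (L / 2) * (1 - ∑ i, ((k n i : ℝ) / (n : ℝ)) ^ 2)) atTop (nhds 0) := by
    have hz : Tendsto (fun n : ℕ => (2 * D) / (n : ℝ)) atTop (nhds 0) :=
      tendsto_const_div_atTop_nhds_zero_nat (2 * D)
    refine squeeze_zero_norm' ?_ hz
    filter_upwards [eventually_gt_atTop 0] with n hn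
    have hn' : (0 : ℝ) < n := by exact_mod_cast hn
    rw [Real.log_div (qfact_pos q hq n).ne'
      (Finset.prod_pos fun i _ => qfact_pos q hq (k n i)).ne',
      Real.log_prod fun i _ => (qfact_pos q hq (k n i)).ne']
    have hE : (1 / (n : ℝ) ^ 2) * (Real.log (qfact q n) - ∑ i, Real.log (qfact q (k n i)))
        - (L / 2) * (1 - ∑ i, ((k n i : ℝ) / (n : ℝ)) ^ 2)
        = (1 / (n : ℝ) ^ 2) * ((Real.log (qfact q n) - L / 2 * (n : ℝ) ^ 2)
          - ∑ i, (Real.log (qfact q (k n i)) - L / 2 * (k n i : ℝ) ^ 2)) := by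
      rw [Finset.sum_sub_distrib, ← Finset.mul_sum]
      simp only [div_pow]
      rw [← Finset.sum_div]
      field_simp
      ring
    have h1 := qfact_log_bound q hq n
    have h2 : |∑ i, (Real.log (qfact q (k n i)) - L / 2 * (k n i : ℝ) ^ 2)| ≤ D * n := by
      refine (Finset.abs_sum_le_sum_abs _ _).trans ?_
      refine (Finset.sum_le_sum fun i _ => qfact_log_bound q hq (k n i)).trans ?_
      rw [← Finset.mul_sum, ← Nat.cast_sum, hk n]
    have h3 := (abs_sub _ _).trans (add_le_add h1 h2)
    rw [hE, Real.norm_eq_abs, abs_mul, abs_of_pos (by positivity : (0 : ℝ) < 1 / (n : ℝ) ^ 2)]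
    refine (mul_le_mul_of_nonneg_left h3 (by positivity)).trans (le_of_eq ?_)
    field_simp
    ring
  have := herr.add hmain
  simpa using this
end

section
/- Let α > 0 with α ≠ 1, K ∈ ℝ, and define the admissible sequence D(n) := exp(K·(n^{α−1} − 1)) for n ≥ 1. Let s ≥ 1, let p : Fin s → ℝ be a probability vector (pᵢ ≥ 0, Σᵢ pᵢ = 1), and let k : ℕ → (Fin s → ℕ) be a sequence with Σᵢ k(n)(i) = n for every n and k(n)(i)/n → pᵢ as n → ∞ for every i. Then (1/n^α)·ln( [n]_D!/∏ᵢ [k(n)(i)]_D! ) → (K/α)·(1 − Σᵢ pᵢ^α) as n → ∞; in particular the limit is a scalar multiple (by K(α−1)/α) of the Tsallis α-entropy S_α(p) = (Σᵢ pᵢ^α − 1)/(1−α). -/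
open Filter

/-- The `D`-factorial `[n]_D! = D n * D (n-1) * ⋯ * D 1`, with `[0]_D! = 1`. -/
noncomputable def Dfact (D : ℕ → ℝ) (n : ℕ) : ℝ := ∏ i ∈ Finset.Icc 1 n, D i

/-- The power sum `1^(α-1) + ⋯ + n^(α-1)`. -/
noncomputable def powSum (α : ℝ) (n : ℕ) : ℝ := ∑ i ∈ Finset.Icc 1 n, (i : ℝ) ^ (α - 1)

theorem aux_mvt (α : ℝ) (hα : 0 < α) (m : ℕ) (hm : 1 ≤ m) :
    ∃ x : ℝ, (m : ℝ) < x ∧ x < m + 1 ∧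
      x ^ (α - 1) = (((m : ℝ) + 1) ^ α) / α - ((m : ℝ) ^ α) / α := by
  have hm' : (1 : ℝ) ≤ m := by exact_mod_cast hm
  have hder : ∀ x : ℝ, 0 < x → HasDerivAt (fun x : ℝ => x ^ α) (α * x ^ (α - 1)) x :=
    fun x hx => Real.hasDerivAt_rpow_const (Or.inl hx.ne')
  obtain ⟨x, hx, h⟩ := exists_hasDerivAt_eq_slope (fun x : ℝ => x ^ α)
    (fun x : ℝ => α * x ^ (α - 1)) (show (m : ℝ) < m + 1 by linarith)
    (fun x hx => (hder x (by linarith [hx.1])).continuousAt.continuousWithinAt)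
    (fun x hx => hder x (by linarith [hx.1]))
  refine ⟨x, hx.1, hx.2, ?_⟩
  simp only [add_sub_cancel_left, div_one] at h
  rw [← sub_div, ← h]
  field_simp

theorem powSum_succ (α : ℝ) (m : ℕ) :
    powSum α (m + 1) = powSum α m + ((m : ℝ) + 1) ^ (α - 1) := by
  unfold powSum
  rw [Finset.sum_Icc_succ_top (by omega)]
  push_cast
  rfl

theorem powSum_bound (α : ℝ) (hα : 0 < α) (m : ℕ) (hm : 1 ≤ m) :
    |powSum α m - (m : ℝ) ^ α / α| ≤ (m : ℝ) ^ (α - 1) + 1 + |1 - 1 / α| := by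
  have hpos : ∀ j : ℕ, (0 : ℝ) ≤ (j : ℝ) ^ (α - 1) := fun j => by positivity
  have h1 : powSum α 1 = 1 := by simp [powSum]
  have hc := neg_abs_le (1 - 1 / α)
  have hc' := le_abs_self (1 - 1 / α)
  rcases le_total 1 α with h | h
  · have key : 1 - 1 / α ≤ powSum α m - (m : ℝ) ^ α / α ∧
        powSum α m - (m : ℝ) ^ α / α ≤ 1 - 1 / α + (m : ℝ) ^ (α - 1) - 1 := by
      induction m, hm using Nat.le_induction with
      | base => simp [h1]
      | succ m hm ih =>
        obtain ⟨x, hx1, hx2, hx⟩ := aux_mvt α hα m hm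
        have a1 : (m : ℝ) ^ (α - 1) ≤ x ^ (α - 1) :=
          Real.rpow_le_rpow (by positivity) hx1.le (by linarith)
        have a2 : x ^ (α - 1) ≤ ((m : ℝ) + 1) ^ (α - 1) :=
          Real.rpow_le_rpow ((Nat.cast_nonneg m).trans hx1.le) hx2.le (by linarith)
        rw [powSum_succ]
        push_cast
        constructor <;> linarith [ih.1, ih.2]
    have := hpos m
    rw [abs_le]
    constructor <;> linarith [key.1, key.2]
  · have key : powSum α m - (m : ℝ) ^ α / α ≤ 1 - 1 / α ∧
        1 - 1 / α + (m : ℝ) ^ (α - 1) - 1 ≤ powSum α m - (m : ℝ) ^ α / α := by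
      induction m, hm using Nat.le_induction with
      | base => simp [h1]
      | succ m hm ih =>
        have hm' : (0 : ℝ) < m := by exact_mod_cast hm
        obtain ⟨x, hx1, hx2, hx⟩ := aux_mvt α hα m hm
        have a1 : x ^ (α - 1) ≤ (m : ℝ) ^ (α - 1) :=
          Real.rpow_le_rpow_of_nonpos hm' hx1.le (by linarith)
        have a2 : ((m : ℝ) + 1) ^ (α - 1) ≤ x ^ (α - 1) :=
          Real.rpow_le_rpow_of_nonpos (hm'.trans hx1) hx2.le (by linarith)
        rw [powSum_succ]
        push_cast
        constructor <;> linarith [ih.1, ih.2]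
    have := hpos m
    rw [abs_le]
    constructor <;> linarith [key.1, key.2]

theorem powSum_bound' (α : ℝ) (hα : 0 < α) (m n : ℕ) (hmn : m ≤ n) :
    |powSum α m - (m : ℝ) ^ α / α| ≤ (n : ℝ) ^ (α - 1) + (2 + |1 - 1 / α|) := by
  have hn : (0 : ℝ) ≤ (n : ℝ) ^ (α - 1) := by positivity
  rcases Nat.eq_zero_or_pos m with rfl | hm
  · simp only [powSum, Nat.cast_zero, Real.zero_rpow hα.ne']
    simp
    positivity
  · have hb := powSum_bound α hα m hm
    have hm' : (1 : ℝ) ≤ m := by exact_mod_cast hm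
    have hmn' : (m : ℝ) ≤ n := by exact_mod_cast hmn
    rcases le_total 1 α with h | h
    · have := Real.rpow_le_rpow (by positivity) hmn' (show 0 ≤ α - 1 by linarith)
      linarith
    · have := Real.rpow_le_one_of_one_le_of_nonpos hm' (show α - 1 ≤ 0 by linarith)
      linarith

theorem powSum_tendsto (α : ℝ) (hα : 0 < α) (k : ℕ → ℕ) (hk : ∀ n, k n ≤ n) (q : ℝ)
    (hq : Tendsto (fun n : ℕ => (k n : ℝ) / (n : ℝ)) atTop (nhds q)) :
    Tendsto (fun n : ℕ => powSum α (k n) / (n : ℝ) ^ α) atTop (nhds (q ^ α / α)) := by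
  have hmain : Tendsto (fun n : ℕ => ((k n : ℝ) / (n : ℝ)) ^ α / α) atTop
      (nhds (q ^ α / α)) := (hq.rpow_const (Or.inr hα.le)).div_const α
  have herr : Tendsto (fun n : ℕ => (powSum α (k n) - (k n : ℝ) ^ α / α) / (n : ℝ) ^ α)
      atTop (nhds 0) := by
    have hinv : Tendsto (fun n : ℕ => ((n : ℝ))⁻¹ +
        (2 + |1 - 1 / α|) * ((n : ℝ) ^ α)⁻¹) atTop (nhds 0) := by
      have e1 : Tendsto (fun n : ℕ => ((n : ℝ))⁻¹) atTop (nhds 0) :=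
        tendsto_inv_atTop_zero.comp tendsto_natCast_atTop_atTop
      have e2 : Tendsto (fun n : ℕ => ((n : ℝ) ^ α)⁻¹) atTop (nhds 0) :=
        tendsto_inv_atTop_zero.comp
          ((tendsto_rpow_atTop hα).comp tendsto_natCast_atTop_atTop)
      simpa using e1.add (e2.const_mul (2 + |1 - 1 / α|))
    refine squeeze_zero_norm' ?_ hinv
    filter_upwards [eventually_ge_atTop 1] with n hn
    have hn' : (0 : ℝ) < n := by exact_mod_cast hn
    have hp : (0 : ℝ) < (n : ℝ) ^ α := by positivity
    rw [Real.norm_eq_abs, abs_div, abs_of_pos hp, div_le_iff₀ hp]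
    refine (powSum_bound' α hα (k n) n (hk n)).trans (le_of_eq ?_)
    rw [Real.rpow_sub_one hn'.ne']
    field_simp
  have := hmain.add herr
  rw [add_zero] at this
  refine this.congr fun n => ?_
  rw [Real.div_rpow (by positivity) (by positivity)]
  ring

theorem Dfact_eq (α K : ℝ) (D : ℕ → ℝ)
    (hD : ∀ n : ℕ, 1 ≤ n → D n = Real.exp (K * ((n : ℝ) ^ (α - 1) - 1))) (n : ℕ) :
    Dfact D n = Real.exp (K * (powSum α n - n)) := by
  unfold Dfact powSum
  rw [Finset.prod_congr rfl (fun i hi => hD i (Finset.mem_Icc.1 hi).1), ← Real.exp_sum,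
    ← Finset.mul_sum, Finset.sum_sub_distrib]
  simp

/-- For the admissible sequence `D(n) = exp(K(n^{α−1} − 1))`, the Fontené–Ward
multinomial coefficients are asymptotically related to the Tsallis α-entropy:
`(1/n^α)·ln W_D(n; k(n)) → (K/α)·(1 − Σᵢ pᵢ^α)` whenever `k(n)/n → p`.
Powers are real powers (`rpow`). -/
theorem fontene_ward_tsallis_asymptotics
    (α : ℝ) (hα : 0 < α) (hα1 : α ≠ 1) (K : ℝ)
    (D : ℕ → ℝ) (hD : ∀ n : ℕ, 1 ≤ n → D n = Real.exp (K * ((n : ℝ) ^ (α - 1) - 1)))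
    (s : ℕ) (hs : 1 ≤ s)
    (p : Fin s → ℝ) (hp : ∀ i, 0 ≤ p i) (hsum : ∑ i, p i = 1)
    (k : ℕ → Fin s → ℕ) (hk : ∀ n, ∑ i, k n i = n)
    (hconv : ∀ i, Tendsto (fun n : ℕ => (k n i : ℝ) / (n : ℝ)) atTop (nhds (p i))) :
    Tendsto
      (fun n : ℕ => (1 / (n : ℝ) ^ α) *
        Real.log (Dfact D n / ∏ i, Dfact D (k n i)))
      atTop (nhds ((K / α) * (1 - ∑ i, p i ^ α))) := by
  have hle : ∀ n i, k n i ≤ n := fun n i => by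
    conv_rhs => rw [← hk n]
    exact Finset.single_le_sum (f := k n) (fun _ _ => Nat.zero_le _) (Finset.mem_univ i)
  have hlog : ∀ n, Real.log (Dfact D n / ∏ i, Dfact D (k n i)) =
      K * (powSum α n - ∑ i, powSum α (k n i)) := by
    intro n
    have hc : ∑ i, (k n i : ℝ) = n := by exact_mod_cast hk n
    simp only [Dfact_eq α K D hD]
    rw [← Real.exp_sum, ← Real.exp_sub, Real.log_exp, ← Finset.mul_sum,
      Finset.sum_sub_distrib, hc]
    ring
  have hone : Tendsto (fun n : ℕ => (n : ℝ) / (n : ℝ)) atTop (nhds 1) := by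
    refine tendsto_const_nhds.congr' ?_
    filter_upwards [eventually_ge_atTop 1] with n hn
    have hn' : (n : ℝ) ≠ 0 := by positivity
    rw [div_self hn']
  have t1 := powSum_tendsto α hα (fun n => n) (fun n => le_rfl) 1 hone
  have t2 := tendsto_finsetSum Finset.univ
    (fun i _ => powSum_tendsto α hα (fun n => k n i) (fun n => hle n i) (p i) (hconv i))
  have t := (t1.sub t2).const_mul K
  have hl : K * (1 ^ α / α - ∑ i, p i ^ α / α) = (K / α) * (1 - ∑ i, p i ^ α) := by
    rw [← Finset.sum_div, Real.one_rpow]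
    ring
  rw [hl] at t
  refine t.congr fun n => ?_
  rw [hlog, ← Finset.sum_div]
  ring
end

section
/- Let α > 1, K > 0, and D(n) := exp(K·(n^{α−1} − 1)) for n ≥ 1. Then for every n ≥ 1 and every k₁,…,k_s ∈ ℕ with Σᵢ kᵢ = n, the Fontené–Ward multinomial coefficient satisfies the explicit bounds K·( n^α/α − Σᵢ ((kᵢ+1)^α − 1)/α ) < ln W_D(n; k₁,…,k_s) < K·( ((n+1)^α − 1)/α − Σᵢ kᵢ^α/α ). -/
theorem fw_tangent (α : ℝ) (hα : 1 < α) (y z : ℝ) (hy : 0 < y) (hz : 0 ≤ z) (hne : z ≠ y) :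
    y ^ α + α * y ^ (α - 1) * (z - y) < z ^ α := by
  have h1 : -1 ≤ z / y - 1 := by
    have : 0 ≤ z / y := by positivity
    linarith
  have h2 : z / y - 1 ≠ 0 := by
    intro h
    apply hne
    have : z / y = 1 := by linarith
    field_simp at this
    exact this
  have h := one_add_mul_self_lt_rpow_one_add h1 h2 hα
  have e : 1 + (z / y - 1) = z / y := by ring
  rw [e, Real.div_rpow hz hy.le] at h
  have hp : 0 < y ^ α := Real.rpow_pos_of_pos hy α
  rw [lt_div_iff₀ hp] at h
  rw [Real.rpow_sub_one hy.ne']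
  calc _ = (1 + α * (z / y - 1)) * y ^ α := by field_simp
    _ < _ := h

theorem fw_lower (α : ℝ) (hα : 1 < α) (m : ℕ) :
    (m : ℝ) ^ α / α ≤ ∑ i ∈ Finset.Icc 1 m, (i : ℝ) ^ (α - 1) ∧
    (1 ≤ m → (m : ℝ) ^ α / α < ∑ i ∈ Finset.Icc 1 m, (i : ℝ) ^ (α - 1)) := by
  have h0 : 0 < α := by linarith
  induction m with
  | zero => simp [Real.zero_rpow h0.ne']
  | succ m ih =>
    have key : ((m + 1 : ℕ) : ℝ) ^ α / α <
        ∑ i ∈ Finset.Icc 1 (m + 1), (i : ℝ) ^ (α - 1) := by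
      rw [Finset.sum_Icc_succ_top (by omega)]
      have h := fw_tangent α hα ((m + 1 : ℕ) : ℝ) m (by positivity) (by positivity)
        (by push_cast; linarith)
      have h3 := ih.1
      rw [div_le_iff₀ h0] at h3
      rw [div_lt_iff₀ h0]
      have e : (m : ℝ) - ((m + 1 : ℕ) : ℝ) = -1 := by push_cast; ring
      rw [e] at h
      linarith
    exact ⟨key.le, fun _ => key⟩

theorem fw_upper (α : ℝ) (hα : 1 < α) (m : ℕ) :
    ∑ i ∈ Finset.Icc 1 m, (i : ℝ) ^ (α - 1) ≤ (((m : ℝ) + 1) ^ α - 1) / α ∧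
    (1 ≤ m → ∑ i ∈ Finset.Icc 1 m, (i : ℝ) ^ (α - 1) < (((m : ℝ) + 1) ^ α - 1) / α) := by
  have h0 : 0 < α := by linarith
  induction m with
  | zero => simp
  | succ m ih =>
    have key : ∑ i ∈ Finset.Icc 1 (m + 1), (i : ℝ) ^ (α - 1) <
        ((((m + 1 : ℕ) : ℝ) + 1) ^ α - 1) / α := by
      rw [Finset.sum_Icc_succ_top (by omega)]
      have h := fw_tangent α hα ((m + 1 : ℕ) : ℝ) (((m + 1 : ℕ) : ℝ) + 1)
        (by positivity) (by positivity) (by linarith)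
      have h3 := ih.1
      rw [le_div_iff₀ h0] at h3
      rw [lt_div_iff₀ h0]
      have e : ((m + 1 : ℕ) : ℝ) + 1 - ((m + 1 : ℕ) : ℝ) = 1 := by ring
      rw [e] at h
      have e2 : (m : ℝ) + 1 = ((m + 1 : ℕ) : ℝ) := by push_cast; ring
      rw [e2] at h3
      linarith
    exact ⟨key.le, fun _ => key⟩

theorem fw_Dfact (α K : ℝ) (D : ℕ → ℝ)
    (hD : ∀ n : ℕ, 1 ≤ n → D n = Real.exp (K * ((n : ℝ) ^ (α - 1) - 1))) (m : ℕ) :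
    Dfact D m = Real.exp (K * (∑ i ∈ Finset.Icc 1 m, (i : ℝ) ^ (α - 1) - m)) := by
  unfold Dfact
  rw [Finset.prod_congr rfl (fun i hi => hD i (Finset.mem_Icc.mp hi).1), ← Real.exp_sum,
    ← Finset.mul_sum, Finset.sum_sub_distrib]
  simp

/-- Explicit bounds on the logarithm of the Fontené–Ward multinomial coefficient
`W_D(n; k₁,…,k_s) = [n]_D!/∏ᵢ [kᵢ]_D!` for the admissible sequence
`D(n) = exp(K(n^{α−1} − 1))` with `α > 1` and `K > 0`.
Powers are real powers (`rpow`). -/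
theorem fontene_ward_log_bounds
    (α : ℝ) (hα : 1 < α) (K : ℝ) (hK : 0 < K)
    (D : ℕ → ℝ) (hD : ∀ n : ℕ, 1 ≤ n → D n = Real.exp (K * ((n : ℝ) ^ (α - 1) - 1)))
    (s : ℕ) (k : Fin s → ℕ) (n : ℕ) (hn : 1 ≤ n) (hsum : ∑ i, k i = n) :
    K * ((n : ℝ) ^ α / α - ∑ i, (((k i : ℝ) + 1) ^ α - 1) / α) <
        Real.log (Dfact D n / ∏ i, Dfact D (k i)) ∧
      Real.log (Dfact D n / ∏ i, Dfact D (k i)) <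
        K * ((((n : ℝ) + 1) ^ α - 1) / α - ∑ i, (k i : ℝ) ^ α / α) := by
  have hlog : Real.log (Dfact D n / ∏ i, Dfact D (k i)) =
      K * (∑ j ∈ Finset.Icc 1 n, (j : ℝ) ^ (α - 1) -
        ∑ i, ∑ j ∈ Finset.Icc 1 (k i), (j : ℝ) ^ (α - 1)) := by
    simp only [fw_Dfact α K D hD]
    rw [← Real.exp_sum, ← Real.exp_sub, Real.log_exp, ← Finset.mul_sum, Finset.sum_sub_distrib]
    have : (n : ℝ) = ∑ i, (k i : ℝ) := by rw [← hsum]; push_cast; rfl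
    rw [← this]
    ring
  rw [hlog]
  have hl := (fw_lower α hα n).2 hn
  have hu := (fw_upper α hα n).2 hn
  have hls := Finset.sum_le_sum (fun i (_ : i ∈ Finset.univ) => (fw_lower α hα (k i)).1)
  have hus := Finset.sum_le_sum (fun i (_ : i ∈ Finset.univ) => (fw_upper α hα (k i)).1)
  constructor
  · apply mul_lt_mul_of_pos_left _ hK
    linarith
  · apply mul_lt_mul_of_pos_left _ hK
    linarith
end

section
/- Let A, B, W be finite types with an injective map ι : W → A × B, and fix α > 0. For ν : W → ℕ let ‖ν‖ := Σ_w ν(w), X_*ν(a) := Σ_{w : (ι w).1 = a} ν(w), ν|_{X=a} := ν·𝟙_{\{w : (ι w).1 = a\}}, and Y_*ν(b) := Σ_{w : (ι w).2 = b} ν(w); define marginals and conditionals of probabilities on W analogously, with p|_{X=a}(w) := p(w)·𝟙_{(ι w).1 = a}/X_*p(a) when X_*p(a) > 0. Suppose ψ_W, ψ_A, ψ_B are strictly positive functions on the nonzero counting functions of W, A, B respectively, satisfying the 1-cocycle identity ψ_W(ν) = ( ∏_{a ∈ A, X_*ν(a) ≠ 0} ψ_B( Y_*(ν|_{X=a})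 ) ) · ψ_A(X_*ν) for all ν ≠ 0. Suppose further that φ_W, φ_A, φ_B are real-valued functions on the probabilities of W, A, B respectively such that, for each of the three pairs (ψ, φ), whenever a sequence of counting functions ν_n satisfies ‖ν_n‖ → ∞ and ν_n(·)/‖ν_n‖ → p pointwise, one has ln ψ(ν_n)/‖ν_n‖^α → φ(p). Then for every probability p on W: φ_W(p) = Σ_{a ∈ A, X_*p(a) > 0} (X_*p(a))^α · φ_B( Y_*(p|_{X=a}) ) + φ_A(X_*p); i.e., φ satisfies the α-deformed chain rule (is a probabilistic 1-cocycle of type α). -/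
open Finset Filter

/-- Asymptotic transfer of the combinatorial 1-cocycle equation to the probabilistic
α-deformed chain rule.  Here `W` is the joint variable `XY`, `A` and `B` are the value
spaces of `X` and `Y`, and `ι : W → A × B` is the injection of joint values into the
product.  If `ψ_W, ψ_A, ψ_B` satisfy the combinatorial cocycle identity and each
`φ` is an `α`-normalized logarithmic limit of the corresponding `ψ` along sequences of
counting functions with empirical frequencies converging to `p`, then `φ` satisfies
the α-deformed chain rule. -/
theorem asymptotic_cocycle_transfer
    {A B W : Type*} [Fintype A] [Fintype B] [Fintype W]
    [DecidableEq A] [DecidableEq B]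
    (ι : W → A × B) (hι : Function.Injective ι)
    (α : ℝ) (hα : 0 < α)
    (ψW : (W → ℕ) → ℝ) (ψA : (A → ℕ) → ℝ) (ψB : (B → ℕ) → ℝ)
    (hψWpos : ∀ ν : W → ℕ, ν ≠ 0 → 0 < ψW ν)
    (hψApos : ∀ ν : A → ℕ, ν ≠ 0 → 0 < ψA ν)
    (hψBpos : ∀ ν : B → ℕ, ν ≠ 0 → 0 < ψB ν)
    -- the combinatorial 1-cocycle identity  ψ_W(ν) = (∏_a ψ_B(Y_*(ν|_{X=a}))) · ψ_A(X_*ν)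
    (hcocycle : ∀ ν : W → ℕ, ν ≠ 0 →
      ψW ν =
        (∏ a ∈ univ.filter
            (fun a : A => (∑ w ∈ univ.filter (fun w => (ι w).1 = a), ν w) ≠ 0),
          ψB (fun b : B =>
            ∑ w ∈ univ.filter (fun w => (ι w).1 = a ∧ (ι w).2 = b), ν w)) *
          ψA (fun a : A => ∑ w ∈ univ.filter (fun w => (ι w).1 = a), ν w))
    (φW : (W → ℝ) → ℝ) (φA : (A → ℝ) → ℝ) (φB : (B → ℝ) → ℝ)
    -- asymptotic relation for the pair (ψ_W, φ_W)
    (hWlim : ∀ p : W → ℝ, (∀ w, 0 ≤ p w) → ∑ w, p w = 1 →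
      ∀ ν : ℕ → W → ℕ,
        Tendsto (fun n => ∑ w, ν n w) atTop atTop →
        (∀ w, Tendsto (fun n => (ν n w : ℝ) / ((∑ u, ν n u : ℕ) : ℝ)) atTop (nhds (p w))) →
        Tendsto (fun n => Real.log (ψW (ν n)) / ((∑ u, ν n u : ℕ) : ℝ) ^ α)
          atTop (nhds (φW p)))
    -- asymptotic relation for the pair (ψ_A, φ_A)
    (hAlim : ∀ p : A → ℝ, (∀ a, 0 ≤ p a) → ∑ a, p a = 1 →
      ∀ ν : ℕ → A → ℕ,
        Tendsto (fun n => ∑ a, ν n a) atTop atTop →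
        (∀ a, Tendsto (fun n => (ν n a : ℝ) / ((∑ u, ν n u : ℕ) : ℝ)) atTop (nhds (p a))) →
        Tendsto (fun n => Real.log (ψA (ν n)) / ((∑ u, ν n u : ℕ) : ℝ) ^ α)
          atTop (nhds (φA p)))
    -- asymptotic relation for the pair (ψ_B, φ_B)
    (hBlim : ∀ p : B → ℝ, (∀ b, 0 ≤ p b) → ∑ b, p b = 1 →
      ∀ ν : ℕ → B → ℕ,
        Tendsto (fun n => ∑ b, ν n b) atTop atTop →
        (∀ b, Tendsto (fun n => (ν n b : ℝ) / ((∑ u, ν n u : ℕ) : ℝ)) atTop (nhds (p b))) →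
        Tendsto (fun n => Real.log (ψB (ν n)) / ((∑ u, ν n u : ℕ) : ℝ) ^ α)
          atTop (nhds (φB p))) :
    -- conclusion: the α-deformed chain rule for φ
    ∀ p : W → ℝ, (∀ w, 0 ≤ p w) → ∑ w, p w = 1 →
      φW p =
        (∑ a ∈ univ.filter
            (fun a : A => 0 < ∑ w ∈ univ.filter (fun w => (ι w).1 = a), p w),
          (∑ w ∈ univ.filter (fun w => (ι w).1 = a), p w) ^ α *
            φB (fun b : B =>
              (∑ w ∈ univ.filter (fun w => (ι w).1 = a ∧ (ι w).2 = b), p w) /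
                ∑ w ∈ univ.filter (fun w => (ι w).1 = a), p w)) +
          φA (fun a : A => ∑ w ∈ univ.filter (fun w => (ι w).1 = a), p w) := by
  intro p hp0 hp1
  set ν : ℕ → W → ℕ := fun n w => ⌊p w * (n : ℝ)⌋₊ with hν
  have hN : ∀ s : Finset W, Tendsto (fun n : ℕ => ((∑ w ∈ s, ν n w : ℕ) : ℝ) / (n : ℝ)) atTop
      (nhds (∑ w ∈ s, p w)) := by
    intro s
    have h1 : ∀ w ∈ s, Tendsto (fun n : ℕ => (ν n w : ℝ) / (n : ℝ)) atTop (nhds (p w)) := by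
      intro w _
      exact (tendsto_nat_floor_mul_div_atTop (hp0 w)).comp tendsto_natCast_atTop_atTop
    have h2 := tendsto_finsetSum s h1
    refine h2.congr ?_
    intro n
    push_cast
    rw [Finset.sum_div]
  have hR : ∀ s t : Finset W, 0 < ∑ w ∈ t, p w →
      Tendsto (fun n : ℕ => ((∑ w ∈ s, ν n w : ℕ) : ℝ) / ((∑ w ∈ t, ν n w : ℕ) : ℝ)) atTop
      (nhds ((∑ w ∈ s, p w) / ∑ w ∈ t, p w)) := by
    intro s t ht
    refine ((hN s).div (hN t) ht.ne').congr' ?_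
    filter_upwards [eventually_gt_atTop 0] with n hn
    have hn' : (n : ℝ) ≠ 0 := by exact_mod_cast hn.ne'
    exact div_div_div_cancel_right₀ hn' _ _
  have hI : ∀ t : Finset W, 0 < ∑ w ∈ t, p w →
      Tendsto (fun n : ℕ => ∑ w ∈ t, ν n w) atTop atTop := by
    intro t ht
    rw [← tendsto_natCast_atTop_iff (R := ℝ)]
    refine ((hN t).pos_mul_atTop ht tendsto_natCast_atTop_atTop).congr' ?_
    filter_upwards [eventually_gt_atTop 0] with n hn
    have hn' : (n : ℝ) ≠ 0 := by exact_mod_cast hn.ne'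
    exact div_mul_cancel₀ _ hn'
  have hpos1 : 0 < ∑ w ∈ (univ : Finset W), p w := by rw [hp1]; exact one_pos
  have hSA : ∀ n, ∑ a, ∑ w ∈ univ.filter (fun w => (ι w).1 = a), ν n w = ∑ w, ν n w :=
    fun n => Finset.sum_fiberwise _ _ _
  have hSB : ∀ n a, ∑ b, ∑ w ∈ univ.filter (fun w => (ι w).1 = a ∧ (ι w).2 = b), ν n w
      = ∑ w ∈ univ.filter (fun w => (ι w).1 = a), ν n w := by
    intro n a
    rw [← Finset.sum_fiberwise (univ.filter (fun w => (ι w).1 = a)) (fun w => (ι w).2)]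
    simp only [Finset.filter_filter]
  have hSBp : ∀ a, ∑ b, ∑ w ∈ univ.filter (fun w => (ι w).1 = a ∧ (ι w).2 = b), p w
      = ∑ w ∈ univ.filter (fun w => (ι w).1 = a), p w := by
    intro a
    rw [← Finset.sum_fiberwise (univ.filter (fun w => (ι w).1 = a)) (fun w => (ι w).2)]
    simp only [Finset.filter_filter]
  have hW := hWlim p hp0 hp1 ν (hI univ hpos1) (by
    intro w
    have := hR {w} univ hpos1
    simpa [hp1] using this)
  have hA := hAlim (fun a : A => ∑ w ∈ univ.filter (fun w => (ι w).1 = a), p w)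
    (fun a => Finset.sum_nonneg fun w _ => hp0 w)
    ((Finset.sum_fiberwise _ _ _).trans hp1)
    (fun n a => ∑ w ∈ univ.filter (fun w => (ι w).1 = a), ν n w)
    (by simp only [hSA]; exact hI univ hpos1)
    (by
      intro a
      simp only [hSA]
      have := hR (univ.filter (fun w => (ι w).1 = a)) univ hpos1
      rwa [hp1, div_one] at this)
  simp only [hSA] at hA
  have hB : ∀ a ∈ univ.filter
      (fun a : A => 0 < ∑ w ∈ univ.filter (fun w => (ι w).1 = a), p w), _ := fun a ha =>
    hBlim (fun b : B =>
              (∑ w ∈ univ.filter (fun w => (ι w).1 = a ∧ (ι w).2 = b), p w) /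
                ∑ w ∈ univ.filter (fun w => (ι w).1 = a), p w)
      (fun b => div_nonneg (Finset.sum_nonneg fun w _ => hp0 w)
        (Finset.sum_nonneg fun w _ => hp0 w))
      (by
        rw [← Finset.sum_div, hSBp]
        exact div_self (Finset.mem_filter.1 ha).2.ne')
      (fun n b => ∑ w ∈ univ.filter (fun w => (ι w).1 = a ∧ (ι w).2 = b), ν n w)
      (by simp only [hSB]; exact hI _ (Finset.mem_filter.1 ha).2)
      (by
        intro b
        simp only [hSB]
        exact hR _ _ (Finset.mem_filter.1 ha).2)
  simp only [hSB] at hB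
  have hC : ∀ a : A, Tendsto (fun n : ℕ =>
      (((∑ w ∈ univ.filter (fun w => (ι w).1 = a), ν n w : ℕ) : ℝ) /
        ((∑ w, ν n w : ℕ) : ℝ)) ^ α) atTop
      (nhds ((∑ w ∈ univ.filter (fun w => (ι w).1 = a), p w) ^ α)) := by
    intro a
    have := hR (univ.filter (fun w => (ι w).1 = a)) univ hpos1
    rw [hp1, div_one] at this
    exact this.rpow_const (Or.inr hα.le)
  have hT := (tendsto_finsetSum _ fun a ha => (hC a).mul (hB a ha)).add hA
  refine tendsto_nhds_unique hW (hT.congr' ?_)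
  have hev : ∀ᶠ n in atTop, ∀ a ∈ univ.filter
      (fun a : A => 0 < ∑ w ∈ univ.filter (fun w => (ι w).1 = a), p w),
      0 < ∑ w ∈ univ.filter (fun w => (ι w).1 = a), ν n w := by
    rw [Filter.eventually_all_finset]
    intro a ha
    exact (hI _ (Finset.mem_filter.1 ha).2).eventually_gt_atTop 0
  filter_upwards [hev, (hI univ hpos1).eventually_gt_atTop 0] with n hn hS
  have hne : ν n ≠ 0 := by
    intro h
    rw [h] at hS
    simp at hS
  have hneA : (fun a : A => ∑ w ∈ univ.filter (fun w => (ι w).1 = a), ν n w) ≠ 0 := by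
    intro h
    have h2 := hSA n
    have h3 : ∀ a : A, ∑ w ∈ univ.filter (fun w => (ι w).1 = a), ν n w = 0 :=
      fun a => congrFun h a
    simp only [h3, Finset.sum_const_zero] at h2
    omega
  have hneB : ∀ a : A, (∑ w ∈ univ.filter (fun w => (ι w).1 = a), ν n w) ≠ 0 →
      (fun b : B => ∑ w ∈ univ.filter (fun w => (ι w).1 = a ∧ (ι w).2 = b), ν n w) ≠ 0 := by
    intro a ha h
    have h2 := hSB n a
    have h3 : ∀ b : B, ∑ w ∈ univ.filter (fun w => (ι w).1 = a ∧ (ι w).2 = b), ν n w = 0 :=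
      fun b => congrFun h b
    simp only [h3, Finset.sum_const_zero] at h2
    omega
  have hF : univ.filter
      (fun a : A => (∑ w ∈ univ.filter (fun w => (ι w).1 = a), ν n w) ≠ 0) =
      univ.filter
      (fun a : A => 0 < ∑ w ∈ univ.filter (fun w => (ι w).1 = a), p w) := by
    ext a
    constructor
    · intro h
      have h1 := (Finset.mem_filter.1 h).2
      refine Finset.mem_filter.2 ⟨Finset.mem_univ _, ?_⟩
      obtain ⟨w, hw, hw0⟩ := Finset.exists_ne_zero_of_sum_ne_zero h1
      refine Finset.sum_pos' (fun w _ => hp0 w) ⟨w, hw, ?_⟩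
      refine lt_of_le_of_ne (hp0 w) fun h0 => hw0 ?_
      simp [hν, ← h0]
    · intro h
      exact Finset.mem_filter.2 ⟨Finset.mem_univ _, (hn a h).ne'⟩
  rw [hcocycle (ν n) hne, hF, Real.log_mul _ (hψApos _ hneA).ne', Real.log_prod, add_div,
    Finset.sum_div]
  · congr 1
    refine Finset.sum_congr rfl fun a ha => ?_
    rw [Real.div_rpow (Nat.cast_nonneg _) (Nat.cast_nonneg _)]
    have hc : (((∑ w ∈ univ.filter (fun w => (ι w).1 = a), ν n w : ℕ) : ℝ)) ^ α ≠ 0 :=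
      (Real.rpow_pos_of_pos (Nat.cast_pos.2 (hn a ha)) α).ne'
    have hs : (((∑ w, ν n w : ℕ) : ℝ)) ^ α ≠ 0 :=
      (Real.rpow_pos_of_pos (Nat.cast_pos.2 hS) α).ne'
    generalize (((∑ w ∈ univ.filter (fun w => (ι w).1 = a), ν n w : ℕ) : ℝ)) ^ α = x at *
    generalize (((∑ w, ν n w : ℕ) : ℝ)) ^ α = y at *
    field_simp
  · intro a ha
    exact (hψBpos _ (hneB a (hn a ha).ne')).ne'
  · exact Finset.prod_ne_zero_iff.2 fun a ha => (hψBpos _ (hneB a (hn a ha).ne')).ne'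
end
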